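/- Let 0<q<1, a,b,c∈ℂ with c ∉ {1,q^{-1},q^{-2},…}, c≠0, and z∈ℂ with |z|<1 and |abz/c|<1. Then ₂φ₁(a,b;c;q,z) = ((abz/c;q)_∞/(z;q)_∞) · ₂φ₁(c/a, c/b; c; q, abz/c). -/

import Mathlib

/-!
Put `w = ab/c`.  As formal power series in `z`, the claim reads
`∑ A_n X^n = R * G` with `A_n = (a)_n (b)_n / ((c)_n (q)_n)`, `R = ∑ (w)_n / (q)_n X^n` and
`G = ∑ (c/a)_n (c/b)_n / ((c)_n (q)_n) w^n X^n`.

Let `σ` be the substitution `X ↦ qX`.  The two-term recurrence for the coefficients of a `₂φ₁`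
is a second-order `q`-difference equation, and that of `R` is `(1 - X) R = (1 - wX) σR`
(`binom_qdiff`).  Combining the latter with the equation of `G` (`euler_qdiff`) shows that `R * G`
satisfies the `q`-difference equation of `∑ A_n X^n`.  A power series solution of that equation is
determined by its constant term because `(1 - q^{n+1})(1 - c q^n) ≠ 0` (`coeff_eq_of_qdiff`);
this gives the formal identity.

Analytically, iterating `(1 - z) r(z) = (1 - wz) r(qz)` and letting `q^N z → 0` gives the
`q`-binomial theorem `r(z) (z)_∞ = (wz)_∞` (`qbinomial`), whose case `w = 0` also shows that
`(z)_∞ ≠ 0` for `|z| < 1`.  The formal identity then turns into the claim by taking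
the Cauchy product of the two absolutely convergent series.
-/

noncomputable section

/-- The finite q-shifted factorial `(a;q)_k`. -/
def qp (q a : ℂ) (k : ℕ) : ℂ := ∏ j ∈ Finset.range k, (1 - a * q ^ j)

/-- The infinite q-shifted factorial `(a;q)_∞`. -/
def qpi (q a : ℂ) : ℂ := ∏' j : ℕ, (1 - a * q ^ j)

/-- The basic hypergeometric series `₂φ₁(a,b;c;q,z)`. -/
def phi21 (q a b c z : ℂ) : ℂ :=
  ∑' k : ℕ, qp q a k * qp q b k / (qp q c k * qp q q k) * z ^ k

open Filter Topology PowerSeries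

lemma qp_zero (q a : ℂ) : qp q a 0 = 1 := by simp [qp]

lemma qp_succ (q a : ℂ) (n : ℕ) : qp q a (n + 1) = qp q a n * (1 - a * q ^ n) := by
  simp [qp, Finset.prod_range_succ]

lemma qp_ne_zero {q a : ℂ} (h : ∀ n : ℕ, a * q ^ n ≠ 1) (n : ℕ) : qp q a n ≠ 0 := by
  rw [qp, Finset.prod_ne_zero_iff]
  intro j _ h0
  exact h j (sub_eq_zero.mp h0).symm

lemma q_mul_pow_ne_one {q : ℂ} (hq1 : ‖q‖ < 1) (n : ℕ) : q * q ^ n ≠ 1 := by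
  intro h
  have h1 : ‖q‖ ^ (n + 1) = 1 := by rw [← norm_pow, pow_succ', h, norm_one]
  exact (pow_lt_one₀ (norm_nonneg q) hq1 (Nat.succ_ne_zero n)).ne h1

/-- The `n`-th coefficient of `₂φ₁(a,b;c;q,z)` as a power series in `z`. -/
def phiCoeff (q a b c : ℂ) (n : ℕ) : ℂ := qp q a n * qp q b n / (qp q c n * qp q q n)

/-- The `n`-th coefficient `(w;q)_n / (q;q)_n` of the `q`-binomial series `₁φ₀(w;q,z)`. -/
def binCoeff (q w : ℂ) (n : ℕ) : ℂ := qp q w n / qp q q n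

lemma phiCoeff_zero (q a b c : ℂ) : phiCoeff q a b c 0 = 1 := by simp [phiCoeff, qp_zero]

lemma binCoeff_zero (q w : ℂ) : binCoeff q w 0 = 1 := by simp [binCoeff, qp_zero]

lemma phiCoeff_succ {q c : ℂ} (a b : ℂ) (hq1 : ‖q‖ < 1) (hc : ∀ n : ℕ, c * q ^ n ≠ 1) (n : ℕ) :
    phiCoeff q a b c (n + 1) =
      (1 - a * q ^ n) * (1 - b * q ^ n) / ((1 - c * q ^ n) * (1 - q * q ^ n)) *
        phiCoeff q a b c n := by
  have h1 := qp_ne_zero hc n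
  have h2 := qp_ne_zero (q_mul_pow_ne_one hq1) n
  have h3 : 1 - c * q ^ n ≠ 0 := sub_ne_zero.mpr (hc n).symm
  have h4 : 1 - q * q ^ n ≠ 0 := sub_ne_zero.mpr (q_mul_pow_ne_one hq1 n).symm
  simp only [phiCoeff, qp_succ]
  generalize q ^ n = Q at *
  field_simp

lemma binCoeff_succ {q : ℂ} (w : ℂ) (hq1 : ‖q‖ < 1) (n : ℕ) :
    binCoeff q w (n + 1) = (1 - w * q ^ n) / (1 - q * q ^ n) * binCoeff q w n := by
  have h2 := qp_ne_zero (q_mul_pow_ne_one hq1) n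
  have h4 : 1 - q * q ^ n ≠ 0 := sub_ne_zero.mpr (q_mul_pow_ne_one hq1 n).symm
  simp only [binCoeff, qp_succ]
  generalize q ^ n = Q at *
  field_simp

/-! ### The formal identity -/

/-- The `q`-difference equation `(1 - X) R = (1 - wX) σR` of the `q`-binomial series. -/
lemma binom_qdiff {q : ℂ} (w : ℂ) (hq1 : ‖q‖ < 1) :
    (1 - X) * PowerSeries.mk (binCoeff q w) =
      (1 - C w * X) * rescale q (PowerSeries.mk (binCoeff q w)) := by
  ext n
  rw [sub_mul, sub_mul, one_mul, one_mul, mul_assoc]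
  cases n with
  | zero =>
    simp only [map_sub, coeff_zero_X_mul, coeff_C_mul, coeff_rescale, coeff_mk]
    ring
  | succ n =>
    have h4 : 1 - q * q ^ n ≠ 0 := sub_ne_zero.mpr (q_mul_pow_ne_one hq1 n).symm
    have hrec := binCoeff_succ w hq1 n
    rw [div_mul_eq_mul_div, eq_div_iff h4] at hrec
    simp only [map_sub, coeff_succ_X_mul, coeff_C_mul, coeff_rescale, coeff_mk]
    linear_combination hrec

/-- The `q`-difference equation of `₂φ₁(c/a,c/b;c;q,wX)` with `w = ab/c`, the parameters
having been cleared of denominators. -/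
lemma euler_qdiff {q a b c w : ℂ} (hq1 : ‖q‖ < 1) (ha : a ≠ 0) (hb : b ≠ 0) (hc0 : c ≠ 0)
    (hc : ∀ n : ℕ, c * q ^ n ≠ 1) (hw : w = a * b / c) :
    let G := PowerSeries.mk fun n => phiCoeff q (c / a) (c / b) c n * w ^ n
    C q * ((1 - C w * X) * G) - (C (q + c) - C (q * (a + b)) * X) * rescale q G
      + C c * ((1 - C q * X) * rescale q (rescale q G)) = 0 := by
  intro G
  ext n
  simp only [sub_mul, one_mul, mul_assoc]
  cases n with
  | zero =>
    simp only [map_sub, map_add, map_zero, coeff_zero_X_mul, coeff_C_mul, coeff_rescale, coeff_mk,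
      add_mul, G]
    ring
  | succ n =>
    have h3 : 1 - c * q ^ n ≠ 0 := sub_ne_zero.mpr (hc n).symm
    have h4 : 1 - q * q ^ n ≠ 0 := sub_ne_zero.mpr (q_mul_pow_ne_one hq1 n).symm
    have hrec := phiCoeff_succ (c / a) (c / b) hq1 hc n
    rw [div_mul_eq_mul_div, eq_div_iff (mul_ne_zero h3 h4)] at hrec
    have hx : w * ((1 - c / a * q ^ n) * (1 - c / b * q ^ n)) =
        w - (a + b) * q ^ n + c * (q ^ n) ^ 2 := by
      rw [hw]
      field_simp
      ring
    simp only [map_sub, map_add, map_zero, coeff_succ_X_mul, coeff_C_mul, coeff_rescale, coeff_mk,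
      G, add_mul]
    linear_combination q * w ^ (n + 1) * hrec + q * w ^ n * phiCoeff q (c / a) (c / b) c n * hx

/-- A power series solution of the `q`-difference equation of `₂φ₁(a,b;c;q,X)` with constant
term `1` has the coefficients of `₂φ₁`. -/
lemma coeff_eq_of_qdiff {q a b c : ℂ} (hq0 : q ≠ 0) (hq1 : ‖q‖ < 1)
    (hc : ∀ n : ℕ, c * q ^ n ≠ 1) (F : PowerSeries ℂ) (h0 : coeff 0 F = 1)
    (hF : C q * ((1 - X) * F) - (C (q + c) - C (q * (a + b)) * X) * rescale q F
      + (C c - C (q * (a * b)) * X) * rescale q (rescale q F) = 0) (n : ℕ) :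
    coeff n F = phiCoeff q a b c n := by
  induction n with
  | zero => rw [h0, phiCoeff_zero]
  | succ n ih =>
    have h3 : 1 - c * q ^ n ≠ 0 := sub_ne_zero.mpr (hc n).symm
    have h4 : 1 - q * q ^ n ≠ 0 := sub_ne_zero.mpr (q_mul_pow_ne_one hq1 n).symm
    have h := congrArg (coeff (n + 1)) hF
    simp only [sub_mul, one_mul, mul_assoc] at h
    simp only [map_sub, map_add, map_zero, coeff_succ_X_mul, coeff_C_mul, coeff_rescale,
      add_mul] at h
    rw [phiCoeff_succ _ _ hq1 hc, ← ih, div_mul_eq_mul_div, eq_div_iff (mul_ne_zero h3 h4)]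
    apply mul_left_cancel₀ hq0
    linear_combination h

/-- The coefficient form of the transformation (equivalent to the `q`-Saalschütz sum). -/
lemma phiCoeff_eq_sum {q a b c w : ℂ} (hq0 : q ≠ 0) (hq1 : ‖q‖ < 1) (ha : a ≠ 0) (hb : b ≠ 0)
    (hc0 : c ≠ 0) (hc : ∀ n : ℕ, c * q ^ n ≠ 1) (hw : w = a * b / c) (n : ℕ) :
    phiCoeff q a b c n = ∑ p ∈ Finset.HasAntidiagonal.antidiagonal n,
      binCoeff q w p.1 * (phiCoeff q (c / a) (c / b) c p.2 * w ^ p.2) := by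
  have hG := euler_qdiff hq1 ha hb hc0 hc hw
  have hR := binom_qdiff w hq1
  set G := PowerSeries.mk fun n => phiCoeff q (c / a) (c / b) c n * w ^ n with hGdef
  set R := PowerSeries.mk (binCoeff q w) with hRdef
  have hR2 := congrArg (rescale q) hR
  have hsC : ∀ r : ℂ, rescale q (C r) = C r := by
    intro r; ext m; cases m <;> simp [coeff_C]
  simp only [map_mul, map_sub, map_one, rescale_X, hsC] at hR2
  have habw : (C (q * (a * b)) : PowerSeries ℂ) = C c * C w * C q := by
    rw [← map_mul, ← map_mul, hw]; congr 1; field_simp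
  have key := coeff_eq_of_qdiff (a := a) (b := b) hq0 hq1 hc (R * G)
    (by simp [hGdef, hRdef, binCoeff_zero, phiCoeff_zero, coeff_mul])
    (by
      simp only [map_mul (rescale q)]
      rw [habw]
      -- `σR` factors out after both uses of the first-order equation of `R`
      linear_combination (rescale q R) * hG + C q * G * hR
        - C c * rescale q (rescale q G) * hR2) n
  rw [← key, coeff_mul]
  simp [hGdef, hRdef]

/-! ### Convergence and the `q`-binomial theorem -/

lemma summable_norm_of_ratio {f ρ : ℕ → ℂ} {l : ℂ} (hf : ∀ n, f (n + 1) = ρ n * f n)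
    (hρ : Tendsto ρ atTop (𝓝 l)) (hl : ‖l‖ < 1) : Summable fun n => ‖f n‖ := by
  obtain ⟨r, hr1, hr2⟩ := exists_between hl
  refine summable_of_ratio_norm_eventually_le (r := r) hr2 ?_
  filter_upwards [hρ.norm.eventually (gt_mem_nhds hr1)] with n hn
  rw [hf, norm_norm, norm_norm, norm_mul]
  exact mul_le_mul_of_nonneg_right hn.le (norm_nonneg _)

lemma tendsto_one_sub {q : ℂ} (hq1 : ‖q‖ < 1) (a : ℂ) :
    Tendsto (fun n : ℕ => 1 - a * q ^ n) atTop (𝓝 1) := by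
  simpa using ((tendsto_pow_atTop_nhds_zero_of_norm_lt_one hq1).const_mul a).const_sub 1

lemma summable_phi {q c z : ℂ} (a b : ℂ) (hq1 : ‖q‖ < 1) (hc : ∀ n : ℕ, c * q ^ n ≠ 1)
    (hz : ‖z‖ < 1) : Summable fun n => ‖phiCoeff q a b c n * z ^ n‖ := by
  refine summable_norm_of_ratio (l := z) (ρ := fun n =>
    (1 - a * q ^ n) * (1 - b * q ^ n) / ((1 - c * q ^ n) * (1 - q * q ^ n)) * z) ?_ ?_ hz
  · intro n; rw [phiCoeff_succ _ _ hq1 hc]; ring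
  · have h := (((tendsto_one_sub hq1 a).mul (tendsto_one_sub hq1 b)).div
      ((tendsto_one_sub hq1 c).mul (tendsto_one_sub hq1 q)) (by simp)).mul_const z
    simpa using h

lemma summable_bin {q z : ℂ} (w : ℂ) (hq1 : ‖q‖ < 1) (hz : ‖z‖ < 1) :
    Summable fun n => ‖binCoeff q w n * z ^ n‖ := by
  refine summable_norm_of_ratio (l := z) (ρ := fun n =>
    (1 - w * q ^ n) / (1 - q * q ^ n) * z) ?_ ?_ hz
  · intro n; rw [binCoeff_succ _ hq1]; ring
  · have h := ((tendsto_one_sub hq1 w).div (tendsto_one_sub hq1 q) (by simp)).mul_const z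
    simpa using h

lemma tendsto_qp {q : ℂ} (hq1 : ‖q‖ < 1) (a : ℂ) :
    Tendsto (fun n => qp q a n) atTop (𝓝 (qpi q a)) := by
  have hs : Summable fun j : ℕ => ‖-(a * q ^ j)‖ := by
    simp only [norm_neg, norm_mul, norm_pow]
    exact (summable_geometric_of_lt_one (norm_nonneg q) hq1).mul_left _
  have h := (multipliable_one_add_of_summable hs).hasProd.tendsto_prod_nat
  simpa [qp, qpi, sub_eq_add_neg] using h

/-- The analytic form of `binom_qdiff`. -/
lemma bin_functional {q z : ℂ} (w : ℂ) (hq1 : ‖q‖ < 1) (hz : ‖z‖ < 1) :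
    (1 - z) * ∑' n, binCoeff q w n * z ^ n =
      (1 - w * z) * ∑' n, binCoeff q w n * (q * z) ^ n := by
  have hqz : ‖q * z‖ < 1 := by
    rw [norm_mul]; exact mul_lt_one_of_nonneg_of_lt_one_left (norm_nonneg _) hq1 hz.le
  have s1 := (summable_bin w hq1 hz).of_norm
  have s2 := (summable_bin w hq1 hqz).of_norm
  have e1 := s1.tsum_eq_zero_add
  have e2 := s2.tsum_eq_zero_add
  have t1 := (summable_nat_add_iff 1).mpr s1
  have t2 := (summable_nat_add_iff 1).mpr s2
  have e3 : ∑' n, binCoeff q w (n + 1) * z ^ (n + 1) - z * ∑' n, binCoeff q w n * z ^ n =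
      ∑' n, binCoeff q w (n + 1) * (q * z) ^ (n + 1)
        - w * z * ∑' n, binCoeff q w n * (q * z) ^ n := by
    rw [← tsum_mul_left, ← tsum_mul_left, ← t1.tsum_sub (s1.mul_left z),
      ← t2.tsum_sub (s2.mul_left (w * z))]
    refine tsum_congr fun n => ?_
    have h4 : 1 - q * q ^ n ≠ 0 := sub_ne_zero.mpr (q_mul_pow_ne_one hq1 n).symm
    have hrec := binCoeff_succ w hq1 n
    rw [div_mul_eq_mul_div, eq_div_iff h4] at hrec
    simp only [mul_pow]
    linear_combination z ^ (n + 1) * hrec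
  simp only [binCoeff_zero, pow_zero, mul_one] at e1 e2
  linear_combination e1 - e2 + e3

/-- The `q`-binomial theorem, with the denominator `(z;q)_∞` cleared. -/
lemma qbinomial {q z : ℂ} (w : ℂ) (hq1 : ‖q‖ < 1) (hz : ‖z‖ < 1) :
    (∑' n, binCoeff q w n * z ^ n) * qpi q z = qpi q (w * z) := by
  have hqz : ∀ N : ℕ, ‖q ^ N * z‖ ≤ ‖z‖ := fun N => by
    rw [norm_mul, norm_pow]
    exact mul_le_of_le_one_left (norm_nonneg _) (pow_le_one₀ (norm_nonneg _) hq1.le)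
  have hfin : ∀ N : ℕ, (∑' n, binCoeff q w n * z ^ n) * qp q z N =
      qp q (w * z) N * ∑' n, binCoeff q w n * (q ^ N * z) ^ n := by
    intro N
    induction N with
    | zero => simp [qp_zero]
    | succ N ih =>
      have h := bin_functional w hq1 ((hqz N).trans_lt hz)
      rw [qp_succ, qp_succ, ← mul_assoc, ih, show q ^ (N + 1) * z = q * (q ^ N * z) by ring]
      linear_combination qp q (w * z) N * h
  have hlim : Tendsto (fun N : ℕ => ∑' n, binCoeff q w n * (q ^ N * z) ^ n) atTop (𝓝 1) := by
    have h1 : (1 : ℂ) = ∑' n, binCoeff q w n * (0 : ℂ) ^ n := by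
      rw [tsum_eq_single 0 (fun n hn => by simp [hn])]; simp [binCoeff_zero]
    rw [h1]
    refine tendsto_tsum_of_dominated_convergence (summable_bin w hq1 hz) ?_ ?_
    · intro n
      have h0 : Tendsto (fun N : ℕ => q ^ N * z) atTop (𝓝 0) := by
        simpa using (tendsto_pow_atTop_nhds_zero_of_norm_lt_one hq1).mul_const z
      exact (h0.pow n).const_mul _
    · refine Eventually.of_forall fun N n => ?_
      rw [norm_mul, norm_mul, norm_pow, norm_pow]
      gcongr
      exact hqz N
  have hL := (tendsto_qp hq1 z).const_mul (∑' n, binCoeff q w n * z ^ n)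
  have hRt := (tendsto_qp hq1 (w * z)).mul hlim
  rw [mul_one] at hRt
  exact tendsto_nhds_unique hL (hRt.congr fun N => (hfin N).symm)

lemma qpi_ne_zero {q z : ℂ} (hq1 : ‖q‖ < 1) (hz : ‖z‖ < 1) : qpi q z ≠ 0 := by
  intro h
  have h1 := qbinomial 0 hq1 hz
  rw [h, mul_zero, zero_mul] at h1
  simp [qpi] at h1

/-- The (Heine/Euler) transformation
`₂φ₁(a,b;c;q,z) = ((abz/c;q)_∞/(z;q)_∞) ₂φ₁(c/a, c/b; c; q, abz/c)`
for `0<q<1`, `c ∉ {1,q^{-1},q^{-2},…}`, `c ≠ 0` (and `a,b ≠ 0` so that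
`c/a`, `c/b` are meaningful), `|z|<1` and `|abz/c|<1`. -/
theorem stmt6 (q : ℝ) (hq0 : 0 < q) (hq1 : q < 1) (a b c z : ℂ)
    (ha : a ≠ 0) (hb : b ≠ 0) (hc0 : c ≠ 0)
    (hc : ∀ n : ℕ, c * (q : ℂ) ^ n ≠ 1)
    (hz : ‖z‖ < 1) (hz' : ‖a * b * z / c‖ < 1) :
    phi21 (q : ℂ) a b c z =
      qpi (q : ℂ) (a * b * z / c) / qpi (q : ℂ) z *
        phi21 (q : ℂ) (c / a) (c / b) c (a * b * z / c) := by
  have hQ0 : (q : ℂ) ≠ 0 := by exact_mod_cast hq0.ne'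
  have hQ1 : ‖(q : ℂ)‖ < 1 := by
    rwa [Complex.norm_real, Real.norm_of_nonneg hq0.le]
  obtain ⟨w, hw⟩ : ∃ w, w = a * b / c := ⟨_, rfl⟩
  have hwz : a * b * z / c = w * z := by rw [hw]; ring
  rw [hwz] at hz' ⊢
  rw [← qbinomial w hQ1 hz, mul_div_cancel_right₀ _ (qpi_ne_zero hQ1 hz)]
  change ∑' k, phiCoeff q a b c k * z ^ k =
    _ * ∑' k, phiCoeff q (c / a) (c / b) c k * (w * z) ^ k
  rw [tsum_mul_tsum_eq_tsum_sum_antidiagonal_of_summable_norm (summable_bin w hQ1 hz)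
    (summable_phi _ _ hQ1 hc hz')]
  refine tsum_congr fun n => ?_
  rw [phiCoeff_eq_sum hQ0 hQ1 ha hb hc0 hc hw, Finset.sum_mul]
  refine Finset.sum_congr rfl fun p hp => ?_
  rw [← Finset.HasAntidiagonal.mem_antidiagonal.mp hp]
  ring
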